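/- For a bounded double complex of finite-dimensional complex vector spaces and every k ∈ ℤ, the integer Δ_k := Σ_{p+q=k} (h_BC^{p,q} + h_A^{p,q}) − 2 b_k is non-negative. -/

import Mathlib

/-!
Two inequalities combine to the theorem. In each bidegree the sequence
`H_BC → H_∂ ⊕ H_∂̄ → H_A`, with maps induced by the identity, is exact in the middle, so
`h_∂ + h_∂̄ ≤ h_BC + h_A`. The Frölicher inequality `b_k ≤ ∑_{p+q=k} h_∂̄^{p,q}` comes from the
column filtration of the total complex: the leading component of a `d`-cocycle is a `∂̄`-cocycle,
and if that component is `∂̄`-exact, then subtracting a `d`-boundary moves the cocycle one step down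
the filtration. Transposing the complex gives `b_k ≤ ∑_{p+q=k} h_∂^{p,q}`.
-/

open Submodule

/-- A double complex of complex vector spaces, presented as a bigraded direct-sum
decomposition `K p q` of an ambient space `V`, together with anticommuting
differentials `d1 = ∂` (of bidegree `(1,0)`) and `d2 = ∂̄` (of bidegree `(0,1)`). -/
structure DoubleComplex (V : Type*) [AddCommGroup V] [Module ℂ V] where
  K : ℤ → ℤ → Submodule ℂ V
  isInternal : DirectSum.IsInternal fun pq : ℤ × ℤ => K pq.1 pq.2
  d1 : V →ₗ[ℂ] V
  d2 : V →ₗ[ℂ] V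
  d1_mem : ∀ p q : ℤ, ∀ x ∈ K p q, d1 x ∈ K (p + 1) q
  d2_mem : ∀ p q : ℤ, ∀ x ∈ K p q, d2 x ∈ K p (q + 1)
  d1_d1 : d1 ∘ₗ d1 = 0
  d2_d2 : d2 ∘ₗ d2 = 0
  anticomm : d1 ∘ₗ d2 + d2 ∘ₗ d1 = 0

/-- The dimension (as a natural number) of the quotient of a submodule `M` of `V`
by (the trace on `M` of) a submodule `N`. -/
noncomputable def qdim {V : Type*} [AddCommGroup V] [Module ℂ V]
    (M N : Submodule ℂ V) : ℕ :=
  Module.finrank ℂ (↥M ⧸ N.comap M.subtype)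

/-- The linear map between quotients `M₁/N₁ → M₂/N₂` induced by the identity,
for `M₁ ≤ M₂` and `N₁ ≤ N₂`. -/
def quotMap {V : Type*} [AddCommGroup V] [Module ℂ V] {M₁ N₁ M₂ N₂ : Submodule ℂ V}
    (hM : M₁ ≤ M₂) (hN : N₁ ≤ N₂) :
    (↥M₁ ⧸ N₁.comap M₁.subtype) →ₗ[ℂ] (↥M₂ ⧸ N₂.comap M₂.subtype) :=
  Submodule.mapQ _ _ (Submodule.inclusion hM) fun _ hx => hN hx

namespace DoubleComplex

variable {V : Type*} [AddCommGroup V] [Module ℂ V] (D : DoubleComplex V)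

/-- A double complex is bounded if only finitely many components are non-zero. -/
def Bounded : Prop := Set.Finite {pq : ℤ × ℤ | D.K pq.1 pq.2 ≠ ⊥}

lemma d1_d1_apply (x : V) : D.d1 (D.d1 x) = 0 := by
  simpa using LinearMap.ext_iff.mp D.d1_d1 x

lemma d2_d2_apply (x : V) : D.d2 (D.d2 x) = 0 := by
  simpa using LinearMap.ext_iff.mp D.d2_d2 x

lemma anticomm_apply (x : V) : D.d1 (D.d2 x) + D.d2 (D.d1 x) = 0 := by
  simpa using LinearMap.ext_iff.mp D.anticomm x

/-- Numerator `ker ∂̄ ∩ K^{p,q}` of the Dolbeault cohomology. -/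
def dolN (p q : ℤ) : Submodule ℂ V := LinearMap.ker D.d2 ⊓ D.K p q
/-- Denominator `∂̄ K^{p,q-1}` of the Dolbeault cohomology. -/
def dolD (p q : ℤ) : Submodule ℂ V := (D.K p (q - 1)).map D.d2
/-- Numerator `ker ∂ ∩ K^{p,q}` of the conjugate Dolbeault cohomology. -/
def conjN (p q : ℤ) : Submodule ℂ V := LinearMap.ker D.d1 ⊓ D.K p q
/-- Denominator `∂ K^{p-1,q}` of the conjugate Dolbeault cohomology. -/
def conjD (p q : ℤ) : Submodule ℂ V := (D.K (p - 1) q).map D.d1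
/-- Numerator `ker ∂ ∩ ker ∂̄ ∩ K^{p,q}` of the Bott-Chern cohomology. -/
def bcN (p q : ℤ) : Submodule ℂ V := LinearMap.ker D.d1 ⊓ LinearMap.ker D.d2 ⊓ D.K p q
/-- Denominator `∂∂̄ K^{p-1,q-1}` of the Bott-Chern cohomology. -/
def bcD (p q : ℤ) : Submodule ℂ V := (D.K (p - 1) (q - 1)).map (D.d1 ∘ₗ D.d2)
/-- Numerator `ker ∂∂̄ ∩ K^{p,q}` of the Aeppli cohomology. -/
def aeN (p q : ℤ) : Submodule ℂ V := LinearMap.ker (D.d1 ∘ₗ D.d2) ⊓ D.K p q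
/-- Denominator `∂ K^{p-1,q} + ∂̄ K^{p,q-1}` of the Aeppli cohomology. -/
def aeD (p q : ℤ) : Submodule ℂ V := (D.K (p - 1) q).map D.d1 ⊔ (D.K p (q - 1)).map D.d2

/-- The degree-`k` part `Tot^k = ⊕_{p+q=k} K^{p,q}` of the total complex. -/
def Tot (k : ℤ) : Submodule ℂ V := ⨆ p : ℤ, D.K p (k - p)
/-- The total differential `d = ∂ + ∂̄`. -/
def dT : V →ₗ[ℂ] V := D.d1 + D.d2
/-- Numerator `ker d ∩ Tot^k` of the de Rham cohomology of the total complex. -/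
def dRN (k : ℤ) : Submodule ℂ V := LinearMap.ker D.dT ⊓ D.Tot k
/-- Denominator `d (Tot^{k-1})` of the de Rham cohomology of the total complex. -/
def dRD (k : ℤ) : Submodule ℂ V := (D.Tot (k - 1)).map D.dT

/-- Hodge number `h_∂̄^{p,q}`. -/
noncomputable def hDol (p q : ℤ) : ℕ := qdim (D.dolN p q) (D.dolD p q)
/-- Conjugate Hodge number `h_∂^{p,q}`. -/
noncomputable def hConj (p q : ℤ) : ℕ := qdim (D.conjN p q) (D.conjD p q)
/-- Bott-Chern number `h_BC^{p,q}`. -/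
noncomputable def hBC (p q : ℤ) : ℕ := qdim (D.bcN p q) (D.bcD p q)
/-- Aeppli number `h_A^{p,q}`. -/
noncomputable def hAe (p q : ℤ) : ℕ := qdim (D.aeN p q) (D.aeD p q)
/-- Betti number `b_k` of the total complex. -/
noncomputable def b (k : ℤ) : ℕ := qdim (D.dRN k) (D.dRD k)

/-- The `∂∂̄`-lemma property:
`ker ∂ ∩ ker ∂̄ ∩ (im ∂ + im ∂̄) ∩ K^{p,q} = ∂∂̄ K^{p-1,q-1}` for every `(p,q)`. -/
def SatisfiesDdbarLemma : Prop :=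
  ∀ p q : ℤ,
    LinearMap.ker D.d1 ⊓ LinearMap.ker D.d2 ⊓ (D.conjD p q ⊔ D.dolD p q) ⊓ D.K p q =
      D.bcD p q

end DoubleComplex

lemma length_le_add_of_ker_le_range {R M N P : Type*} [Ring R] [AddCommGroup M] [AddCommGroup N]
    [AddCommGroup P] [Module R M] [Module R N] [Module R P] {f : M →ₗ[R] N} {g : N →ₗ[R] P}
    (h : LinearMap.ker g ≤ LinearMap.range f) :
    Module.length R N ≤ Module.length R M + Module.length R P := by
  have hker : Module.length R (LinearMap.ker g) ≤ Module.length R M :=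
    (Module.length_le_of_injective _ (Submodule.inclusion_injective h)).trans
      (Module.length_le_of_surjective f.rangeRestrict f.surjective_rangeRestrict)
  have hquot : Module.length R (N ⧸ LinearMap.ker g) ≤ Module.length R P :=
    g.quotKerEquivRange.length_eq.trans_le
      (Module.length_le_of_injective _ (LinearMap.range g).injective_subtype)
  calc Module.length R N
      = Module.length R (LinearMap.ker g) + Module.length R (N ⧸ LinearMap.ker g) :=
        Module.length_eq_add_of_exact _ _ (LinearMap.ker g).injective_subtype
          (LinearMap.ker g).mkQ_surjective (LinearMap.exact_subtype_mkQ _)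
    _ ≤ Module.length R M + Module.length R P := add_le_add hker hquot

lemma length_le_of_ker_le_ker {R M N P : Type*} [Ring R] [AddCommGroup M] [AddCommGroup N]
    [AddCommGroup P] [Module R M] [Module R N] [Module R P] {f : M →ₗ[R] N} {g : M →ₗ[R] P}
    (hg : Function.Surjective g) (h : LinearMap.ker f ≤ LinearMap.ker g) :
    Module.length R P ≤ Module.length R N := by
  have hlift : Function.Surjective ((LinearMap.ker f).liftQ g h) := by
    rwa [← LinearMap.range_eq_top, Submodule.range_liftQ, LinearMap.range_eq_top]
  calc Module.length R P
      ≤ Module.length R (M ⧸ LinearMap.ker f) := Module.length_le_of_surjective _ hlift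
    _ = Module.length R (LinearMap.range f) := f.quotKerEquivRange.length_eq
    _ ≤ Module.length R N :=
        Module.length_le_of_injective _ (LinearMap.range f).injective_subtype

section RelativeDimension

variable {V : Type*} [AddCommGroup V] [Module ℂ V] {L M N : Submodule ℂ V}

/-- The dimension, as an extended natural number, of the quotient of `M` by (the trace on `M` of)
`N`. It agrees with `qdim M N` when that quotient is finite-dimensional, and is `⊤` rather than the
junk value `0` otherwise. -/
noncomputable def eqdim (M N : Submodule ℂ V) : ℕ∞ :=
  Module.length ℂ (↥M ⧸ N.comap M.subtype)

lemma eqdim_eq_qdim (M N : Submodule ℂ V) [FiniteDimensional ℂ (↥M ⧸ N.comap M.subtype)] :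
    eqdim M N = qdim M N :=
  Module.length_eq_finrank ℂ _

lemma qdim_le_eqdim (M N : Submodule ℂ V) : (qdim M N : ℕ∞) ≤ eqdim M N := by
  by_cases h : FiniteDimensional ℂ (↥M ⧸ N.comap M.subtype)
  · exact (eqdim_eq_qdim M N).ge
  · simp [qdim, Module.finrank_of_not_finite h]

lemma eqdim_eq_zero (h : M ≤ N) : eqdim M N = 0 := by
  rw [eqdim, Submodule.comap_subtype_eq_top.2 h, Module.length_eq_zero_iff]
  infer_instance

lemma eqdim_le_eqdim_of_comap_le {W : Type*} [AddCommGroup W] [Module ℂ W]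
    {M' N' : Submodule ℂ W} (φ : V →ₗ[ℂ] W)
    (hM : ∀ x ∈ M, φ x ∈ M') (hN : ∀ x ∈ M, φ x ∈ N' → x ∈ N) :
    eqdim M N ≤ eqdim M' N' :=
  length_le_of_ker_le_ker (f := (N'.comap M'.subtype).mkQ ∘ₗ φ.restrict hM)
    (Submodule.mkQ_surjective (N.comap M.subtype)) fun x hx => by
      simp only [LinearMap.mem_ker, LinearMap.comp_apply, Submodule.mkQ_apply,
        Submodule.Quotient.mk_eq_zero, Submodule.mem_comap] at hx ⊢
      exact hN x x.2 hx

lemma eqdim_mono_left (h : L ≤ M) : eqdim L N ≤ eqdim M N :=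
  eqdim_le_eqdim_of_comap_le LinearMap.id h fun _ _ hx => hx

lemma eqdim_anti_right (h : L ≤ N) : eqdim M N ≤ eqdim M L :=
  eqdim_le_eqdim_of_comap_le LinearMap.id (fun _ hx => hx) fun _ _ hx => h hx

lemma quotMap_mk {M₁ N₁ M₂ N₂ : Submodule ℂ V} (hM : M₁ ≤ M₂) (hN : N₁ ≤ N₂) (x : M₁) :
    quotMap hM hN (Submodule.Quotient.mk x) = Submodule.Quotient.mk ⟨x, hM x.2⟩ :=
  rfl

lemma eqdim_le_add_eqdim_sup (h : M ≤ L) : eqdim L N ≤ eqdim M N + eqdim L (M ⊔ N) := by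
  refine length_le_add_of_ker_le_range (f := quotMap h le_rfl)
    (g := quotMap le_rfl le_sup_right) fun x hx => ?_
  obtain ⟨x, rfl⟩ := Submodule.Quotient.mk_surjective _ x
  rw [LinearMap.mem_ker, quotMap_mk, Submodule.Quotient.mk_eq_zero] at hx
  obtain ⟨y, hy, z, hz, hyz⟩ := Submodule.mem_sup.1 hx
  refine ⟨Submodule.Quotient.mk ⟨y, hy⟩, ?_⟩
  rw [quotMap_mk, Submodule.Quotient.eq']
  have hdiff : -y + x = z := neg_add_eq_of_eq_add hyz.symm
  simpa [hdiff] using hz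

lemma eqdim_add_eqdim_le_inf_add_sup {M₁ N₁ M₂ N₂ : Submodule ℂ V} (h₁ : N₁ ≤ M₁) (h₂ : N₂ ≤ M₂) :
    eqdim M₁ N₁ + eqdim M₂ N₂ ≤ eqdim (M₁ ⊓ M₂) (N₁ ⊓ N₂) + eqdim (M₁ ⊔ M₂) (N₁ ⊔ N₂) := by
  rw [eqdim, eqdim, ← Module.length_prod]
  refine length_le_add_of_ker_le_range
    (f := (quotMap inf_le_left inf_le_left).prod (quotMap inf_le_right inf_le_right))
    (g := (quotMap le_sup_left le_sup_left).coprod (-quotMap le_sup_right le_sup_right)) ?_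
  rintro ⟨x, y⟩ hxy
  obtain ⟨x, rfl⟩ := Submodule.Quotient.mk_surjective _ x
  obtain ⟨y, rfl⟩ := Submodule.Quotient.mk_surjective _ y
  rw [LinearMap.mem_ker, LinearMap.coprod_apply, LinearMap.neg_apply, ← sub_eq_add_neg, quotMap_mk,
    quotMap_mk, sub_eq_zero, Submodule.Quotient.eq] at hxy
  have hdiff : (x : V) - y ∈ N₁ ⊔ N₂ := hxy
  obtain ⟨u, hu, v, hv, huv⟩ := Submodule.mem_sup.1 hdiff
  have hlift : (x : V) - u = y + v := by grind
  refine ⟨Submodule.Quotient.mk ⟨x - u, sub_mem x.2 (h₁ hu), hlift ▸ add_mem y.2 (h₂ hv)⟩,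
    Prod.ext ?_ ?_⟩
  · exact (Submodule.Quotient.eq _).2 (by simpa using hu)
  · exact (Submodule.Quotient.eq _).2 (by simpa [hlift] using hv)

end RelativeDimension

namespace DoubleComplex

variable {V : Type*} [AddCommGroup V] [Module ℂ V] (D : DoubleComplex V)

/-- The projection of `V` onto its summand `K^{p,q}`. -/
noncomputable def proj (p q : ℤ) : V →ₗ[ℂ] V :=
  (D.K p q).subtype ∘ₗ DirectSum.component ℂ (ℤ × ℤ) (fun pq => D.K pq.1 pq.2) (p, q) ∘ₗ
    (LinearEquiv.ofBijective (DirectSum.coeLinearMap _) D.isInternal).symm.toLinearMap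

lemma proj_mem (p q : ℤ) (x : V) : D.proj p q x ∈ D.K p q :=
  Submodule.coe_mem _

variable {D} in
lemma proj_of_mem {p q : ℤ} {x : V} (hx : x ∈ D.K p q) : D.proj p q x = x :=
  congrArg Subtype.val (D.isInternal.ofBijective_coeLinearMap_of_mem (i := (p, q)) hx)

variable {D} in
lemma proj_of_mem_of_ne {p q p' q' : ℤ} {x : V} (hx : x ∈ D.K p' q') (h : (p', q') ≠ (p, q)) :
    D.proj p q x = 0 :=
  congrArg Subtype.val (D.isInternal.ofBijective_coeLinearMap_of_mem_ne h hx)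

lemma eq_zero_of_forall_proj_eq_zero {x : V} (h : ∀ p q, D.proj p q x = 0) : x = 0 := by
  rw [← LinearEquiv.map_eq_zero_iff
    (LinearEquiv.ofBijective (DirectSum.coeLinearMap _) D.isInternal).symm]
  exact DFinsupp.ext fun pq => Subtype.ext (h pq.1 pq.2)

lemma hom_ext {W : Type*} [AddCommGroup W] [Module ℂ W] {f g : V →ₗ[ℂ] W}
    (h : ∀ p q, ∀ x ∈ D.K p q, f x = g x) : f = g := by
  rw [← LinearMap.eqLocus_eq_top, eq_top_iff, ← D.isInternal.submodule_iSup_eq_top]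
  exact iSup_le fun pq x hx => h pq.1 pq.2 x hx

lemma proj_map {f : V →ₗ[ℂ] V} {σ τ : ℤ → ℤ} (hσ : Function.Injective σ)
    (hτ : Function.Injective τ) (hf : ∀ p q, ∀ x ∈ D.K p q, f x ∈ D.K (σ p) (τ q)) (p q : ℤ)
    (x : V) : D.proj (σ p) (τ q) (f x) = f (D.proj p q x) := by
  suffices D.proj (σ p) (τ q) ∘ₗ f = f ∘ₗ D.proj p q from LinearMap.congr_fun this x
  refine D.hom_ext fun p' q' y hy => ?_
  simp only [LinearMap.comp_apply]
  by_cases h : (p', q') = (p, q)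
  · obtain ⟨rfl, rfl⟩ := Prod.mk.inj h
    rw [proj_of_mem hy, proj_of_mem (hf _ _ y hy)]
  · rw [proj_of_mem_of_ne hy h, map_zero,
      proj_of_mem_of_ne (hf _ _ y hy) ((hσ.prodMap hτ).ne h)]

lemma proj_d1 (p q : ℤ) (x : V) : D.proj (p + 1) q (D.d1 x) = D.d1 (D.proj p q x) :=
  D.proj_map (add_left_injective 1) Function.injective_id D.d1_mem p q x

lemma proj_d2 (p q : ℤ) (x : V) : D.proj p (q + 1) (D.d2 x) = D.d2 (D.proj p q x) :=
  D.proj_map Function.injective_id (add_left_injective 1) D.d2_mem p q x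

lemma proj_dT (p q : ℤ) (x : V) :
    D.proj p q (D.dT x) = D.d1 (D.proj (p - 1) q x) + D.d2 (D.proj p (q - 1) x) := by
  rw [← proj_d1, ← proj_d2, sub_add_cancel, sub_add_cancel, dT, LinearMap.add_apply, map_add]

lemma dT_dT_apply (x : V) : D.dT (D.dT x) = 0 := by
  simp only [dT, LinearMap.add_apply, map_add, d1_d1_apply, d2_d2_apply, zero_add, add_zero]
  exact (add_comm _ _).trans (D.anticomm_apply x)

variable {D} in
lemma mem_Tot {p q : ℤ} {x : V} (hx : x ∈ D.K p q) {k : ℤ} (h : p + q = k) : x ∈ D.Tot k := by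
  subst h
  exact Submodule.mem_iSup_of_mem p (by rwa [add_sub_cancel_left])

lemma dRD_le_dRN (k : ℤ) : D.dRD k ≤ D.dRN k := by
  refine le_inf ?_ ?_
  · rintro _ ⟨x, -, rfl⟩
    exact D.dT_dT_apply x
  · rw [dRD, Tot, Submodule.map_iSup]
    refine iSup_le fun p => ?_
    rintro _ ⟨x, hx, rfl⟩
    exact add_mem (mem_Tot (D.d1_mem _ _ x hx) (by ring)) (mem_Tot (D.d2_mem _ _ x hx) (by ring))

lemma proj_eq_zero_of_mem_Tot {k p q : ℤ} (h : p + q ≠ k) {x : V} (hx : x ∈ D.Tot k) :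
    D.proj p q x = 0 := by
  suffices D.Tot k ≤ LinearMap.ker (D.proj p q) from this hx
  refine iSup_le fun p' y hy => proj_of_mem_of_ne hy fun hp => h ?_
  obtain ⟨rfl, rfl⟩ := Prod.mk.inj hp
  ring

/-- The total cocycles of degree `k` whose components in the columns `p < n` vanish: the filtration
of `dRN k` induced by the column filtration of the total complex. -/
noncomputable def cocycleFiltration (k n : ℤ) : Submodule ℂ V :=
  D.dRN k ⊓ ⨅ p < n, LinearMap.ker (D.proj p (k - p))

variable {D} in
lemma mem_cocycleFiltration {k n : ℤ} {x : V} :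
    x ∈ D.cocycleFiltration k n ↔ x ∈ D.dRN k ∧ ∀ p < n, D.proj p (k - p) x = 0 := by
  simp [cocycleFiltration]

lemma cocycleFiltration_antitone (k : ℤ) : Antitone (D.cocycleFiltration k) :=
  fun _ _ h _ hx => mem_cocycleFiltration.2
    ⟨(mem_cocycleFiltration.1 hx).1, fun p hp => (mem_cocycleFiltration.1 hx).2 p (hp.trans_le h)⟩

lemma cocycleFiltration_eq_dRN {k n : ℤ} (h : ∀ p < n, D.K p (k - p) = ⊥) :
    D.cocycleFiltration k n = D.dRN k := by
  refine inf_eq_left.2 fun x _ => ?_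
  simp only [Submodule.mem_iInf, LinearMap.mem_ker]
  intro p hp
  simpa [h p hp] using D.proj_mem p (k - p) x

lemma cocycleFiltration_eq_bot {k n : ℤ} (h : ∀ p, n ≤ p → D.K p (k - p) = ⊥) :
    D.cocycleFiltration k n = ⊥ := by
  refine (Submodule.eq_bot_iff _).2 fun x hx => D.eq_zero_of_forall_proj_eq_zero fun p q => ?_
  obtain ⟨⟨-, hTot⟩, hlow⟩ := mem_cocycleFiltration.1 hx
  rcases eq_or_ne (p + q) k with rfl | hpq
  · rcases lt_or_ge p n with hp | hp
    · simpa using hlow p hp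
    · have hbot : D.K p q = ⊥ := by simpa using h p hp
      simpa [hbot] using D.proj_mem p q x
  · exact D.proj_eq_zero_of_mem_Tot hpq hTot

lemma proj_mem_dolN {k n : ℤ} {x : V} (hx : x ∈ D.cocycleFiltration k n) :
    D.proj n (k - n) x ∈ D.dolN n (k - n) := by
  obtain ⟨⟨hd, -⟩, hlow⟩ := mem_cocycleFiltration.1 hx
  refine ⟨?_, D.proj_mem _ _ x⟩
  have hprev : D.proj (n - 1) (k - n + 1) x = 0 := by
    simpa [sub_sub_eq_add_sub, sub_add_eq_add_sub] using hlow (n - 1) (by simp)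
  simpa [LinearMap.mem_ker.1 hd, hprev, eq_comm] using D.proj_dT n (k - n + 1) x

lemma mem_sup_dRD_of_proj_mem_dolD {k n : ℤ} {x : V} (hx : x ∈ D.cocycleFiltration k n)
    (hproj : D.proj n (k - n) x ∈ D.dolD n (k - n)) :
    x ∈ D.cocycleFiltration k (n + 1) ⊔ D.dRD k := by
  obtain ⟨y, hy, hyx⟩ := hproj
  obtain ⟨hcocycle, hlow⟩ := mem_cocycleFiltration.1 hx
  have hdy : D.dT y ∈ D.dRD k := ⟨y, mem_Tot hy (by ring), rfl⟩
  refine Submodule.mem_sup.2 ⟨x - D.dT y, ?_, D.dT y, hdy, sub_add_cancel _ _⟩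
  refine mem_cocycleFiltration.2 ⟨sub_mem hcocycle (D.dRD_le_dRN k hdy), fun p hp => ?_⟩
  have hd1 : D.proj (p - 1) (k - p) y = 0 := proj_of_mem_of_ne hy (by grind)
  rw [map_sub, proj_dT, hd1, map_zero, zero_add, sub_eq_zero]
  rcases (Int.lt_add_one_iff.1 hp).lt_or_eq with hpn | rfl
  · rw [hlow p hpn, proj_of_mem_of_ne hy (by grind), map_zero]
  · rw [proj_of_mem hy, hyx]

lemma eqdim_cocycleFiltration_le (k n : ℤ) :
    eqdim (D.cocycleFiltration k n) (D.dRD k) ≤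
      eqdim (D.cocycleFiltration k (n + 1)) (D.dRD k) +
        eqdim (D.dolN n (k - n)) (D.dolD n (k - n)) :=
  (eqdim_le_add_eqdim_sup (D.cocycleFiltration_antitone k (Int.le.intro 1 rfl))).trans <|
    add_le_add_right (eqdim_le_eqdim_of_comap_le (D.proj n (k - n)) (fun _ => D.proj_mem_dolN)
      fun _ => D.mem_sup_dRD_of_proj_mem_dolD) _

lemma eqdim_cocycleFiltration_le_sum (k : ℤ) {m n : ℤ} (h : m ≤ n) :
    eqdim (D.cocycleFiltration k m) (D.dRD k) ≤
      eqdim (D.cocycleFiltration k n) (D.dRD k) +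
        ∑ p ∈ Finset.Ico m n, eqdim (D.dolN p (k - p)) (D.dolD p (k - p)) := by
  induction n, h using Int.leInduction with
  | base => simp
  | succ n hmn ih =>
    rw [← Finset.insert_Ico_right_eq_Ico_add_one hmn, Finset.sum_insert Finset.right_notMem_Ico,
      ← add_assoc]
    exact ih.trans (add_le_add_left (D.eqdim_cocycleFiltration_le k n) _)

lemma eqdim_dRN_le_finsum_dol {k : ℤ} (hk : {p | D.K p (k - p) ≠ ⊥}.Finite) :
    eqdim (D.dRN k) (D.dRD k) ≤ ∑ᶠ p, eqdim (D.dolN p (k - p)) (D.dolD p (k - p)) := by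
  obtain ⟨m, hm⟩ := hk.bddBelow
  obtain ⟨b, hb⟩ := hk.bddAbove
  set n := max m (b + 1)
  have hlow : ∀ p < m, D.K p (k - p) = ⊥ := fun p hp => by_contra fun h => hp.not_ge (hm h)
  have hhigh : ∀ p, n ≤ p → D.K p (k - p) = ⊥ := fun p hp =>
    by_contra fun h => by grind [hb h]
  calc eqdim (D.dRN k) (D.dRD k)
      = eqdim (D.cocycleFiltration k m) (D.dRD k) := by rw [D.cocycleFiltration_eq_dRN hlow]
    _ ≤ eqdim (D.cocycleFiltration k n) (D.dRD k) +
          ∑ p ∈ Finset.Ico m n, eqdim (D.dolN p (k - p)) (D.dolD p (k - p)) :=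
        D.eqdim_cocycleFiltration_le_sum k (le_max_left _ _)
    _ = ∑ p ∈ Finset.Ico m n, eqdim (D.dolN p (k - p)) (D.dolD p (k - p)) := by
        rw [D.cocycleFiltration_eq_bot hhigh, eqdim_eq_zero bot_le, zero_add]
    _ = ∑ᶠ p, eqdim (D.dolN p (k - p)) (D.dolD p (k - p)) := by
        refine (finsum_eq_sum_of_support_subset _ fun p hp => ?_).symm
        rw [Finset.coe_Ico]
        by_contra hmem
        have hbot : D.K p (k - p) = ⊥ := by grind
        exact hp (eqdim_eq_zero (by simp [dolN, hbot]))

/-- The double complex with the roles of `∂` and `∂̄`, and of the two degrees, interchanged. It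
carries statements on Dolbeault cohomology over to conjugate Dolbeault cohomology. -/
def transpose : DoubleComplex V where
  K p q := D.K q p
  isInternal := by
    rw [DirectSum.isInternal_submodule_iff_iSupIndep_and_iSup_eq_top]
    refine ⟨?_, ?_⟩
    · exact D.isInternal.submodule_iSupIndep.comp Prod.swap_injective
    · rw [← D.isInternal.submodule_iSup_eq_top]
      exact Prod.swap_surjective.iSup_comp fun pq : ℤ × ℤ => D.K pq.1 pq.2
  d1 := D.d2
  d2 := D.d1
  d1_mem p q := D.d2_mem q p
  d2_mem p q := D.d1_mem q p
  d1_d1 := D.d2_d2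
  d2_d2 := D.d1_d1
  anticomm := (add_comm _ _).trans D.anticomm

lemma transpose_Tot (k : ℤ) : D.transpose.Tot k = D.Tot k := by
  rw [Tot, Tot, ← (Equiv.subLeft k).iSup_comp]
  simp [transpose]

lemma transpose_dT : D.transpose.dT = D.dT :=
  add_comm _ _

lemma eqdim_dRN_le_finsum_conj {k : ℤ} (hk : {p | D.K p (k - p) ≠ ⊥}.Finite) :
    eqdim (D.dRN k) (D.dRD k) ≤ ∑ᶠ p, eqdim (D.conjN p (k - p)) (D.conjD p (k - p)) := by
  have hk' : {p | D.transpose.K p (k - p) ≠ ⊥}.Finite := by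
    refine (hk.image (k - ·)).subset fun p hp => ⟨k - p, ?_, sub_sub_cancel k p⟩
    simpa [transpose] using hp
  calc eqdim (D.dRN k) (D.dRD k)
      = eqdim (D.transpose.dRN k) (D.transpose.dRD k) := by
        simp only [dRN, dRD, transpose_dT, transpose_Tot]
    _ ≤ ∑ᶠ p, eqdim (D.conjN (k - p) p) (D.conjD (k - p) p) :=
        D.transpose.eqdim_dRN_le_finsum_dol hk'
    _ = ∑ᶠ p, eqdim (D.conjN p (k - p)) (D.conjD p (k - p)) := by
        rw [← finsum_comp_equiv (Equiv.subLeft k)]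
        simp

lemma d2_d1_apply (x : V) : D.d2 (D.d1 x) = -D.d1 (D.d2 x) :=
  eq_neg_of_add_eq_zero_right (D.anticomm_apply x)

lemma conjD_le_conjN (p q : ℤ) : D.conjD p q ≤ D.conjN p q := by
  rintro _ ⟨x, hx, rfl⟩
  exact ⟨D.d1_d1_apply x, by simpa using D.d1_mem _ _ x hx⟩

lemma dolD_le_dolN (p q : ℤ) : D.dolD p q ≤ D.dolN p q :=
  D.transpose.conjD_le_conjN q p

lemma conjN_inf_dolN (p q : ℤ) : D.conjN p q ⊓ D.dolN p q = D.bcN p q :=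
  (inf_inf_distrib_right _ _ _).symm

lemma bcD_le_conjD_inf_dolD (p q : ℤ) : D.bcD p q ≤ D.conjD p q ⊓ D.dolD p q := by
  rintro _ ⟨x, hx, rfl⟩
  refine ⟨⟨D.d2 x, by simpa using D.d2_mem _ _ x hx, rfl⟩,
    ⟨-D.d1 x, neg_mem (by simpa using D.d1_mem _ _ x hx), ?_⟩⟩
  simp [d2_d1_apply]

lemma conjN_sup_dolN_le_aeN (p q : ℤ) : D.conjN p q ⊔ D.dolN p q ≤ D.aeN p q := by
  refine sup_le (inf_le_inf_right _ fun x hx => ?_) (inf_le_inf_right _ fun x hx => ?_)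
  · rw [LinearMap.mem_ker, LinearMap.comp_apply, ← neg_eq_zero, ← d2_d1_apply,
      LinearMap.mem_ker.1 hx, map_zero]
  · rw [LinearMap.mem_ker, LinearMap.comp_apply, LinearMap.mem_ker.1 hx, map_zero]

lemma eqdim_conj_add_eqdim_dol_le (p q : ℤ) :
    eqdim (D.conjN p q) (D.conjD p q) + eqdim (D.dolN p q) (D.dolD p q) ≤
      eqdim (D.bcN p q) (D.bcD p q) + eqdim (D.aeN p q) (D.aeD p q) := by
  refine (eqdim_add_eqdim_le_inf_add_sup (D.conjD_le_conjN p q) (D.dolD_le_dolN p q)).trans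
    (add_le_add ?_ ?_)
  · rw [conjN_inf_dolN]
    exact eqdim_anti_right (D.bcD_le_conjD_inf_dolD p q)
  · exact eqdim_mono_left (D.conjN_sup_dolN_le_aeN p q)

lemma hasFiniteSupport_eqdim {k : ℤ} (hk : {p | D.K p (k - p) ≠ ⊥}.Finite)
    {M N : ℤ → Submodule ℂ V} (hM : ∀ p, M p ≤ D.K p (k - p)) :
    (fun p => eqdim (M p) (N p)).HasFiniteSupport :=
  hk.subset fun p hp hbot => hp (eqdim_eq_zero ((hM p).trans (hbot.trans_le bot_le)))

lemma two_mul_eqdim_dRN_le {k : ℤ} (hk : {p | D.K p (k - p) ≠ ⊥}.Finite) :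
    2 * eqdim (D.dRN k) (D.dRD k) ≤
      ∑ᶠ p, (eqdim (D.bcN p (k - p)) (D.bcD p (k - p)) +
        eqdim (D.aeN p (k - p)) (D.aeD p (k - p))) := by
  have hconj := D.hasFiniteSupport_eqdim (N := fun p => D.conjD p (k - p)) hk
    fun p => (inf_le_right : D.conjN p (k - p) ≤ _)
  have hdol := D.hasFiniteSupport_eqdim (N := fun p => D.dolD p (k - p)) hk
    fun p => (inf_le_right : D.dolN p (k - p) ≤ _)
  have hbc := D.hasFiniteSupport_eqdim (N := fun p => D.bcD p (k - p)) hk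
    fun p => (inf_le_right : D.bcN p (k - p) ≤ _)
  have hae := D.hasFiniteSupport_eqdim (N := fun p => D.aeD p (k - p)) hk
    fun p => (inf_le_right : D.aeN p (k - p) ≤ _)
  calc 2 * eqdim (D.dRN k) (D.dRD k)
      = eqdim (D.dRN k) (D.dRD k) + eqdim (D.dRN k) (D.dRD k) := two_mul _
    _ ≤ ∑ᶠ p, eqdim (D.conjN p (k - p)) (D.conjD p (k - p)) +
          ∑ᶠ p, eqdim (D.dolN p (k - p)) (D.dolD p (k - p)) :=
        add_le_add (D.eqdim_dRN_le_finsum_conj hk) (D.eqdim_dRN_le_finsum_dol hk)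
    _ = ∑ᶠ p, (eqdim (D.conjN p (k - p)) (D.conjD p (k - p)) +
          eqdim (D.dolN p (k - p)) (D.dolD p (k - p))) := (finsum_add_distrib hconj hdol).symm
    _ ≤ _ := finsum_le_finsum' (hconj.add hdol) (hbc.add hae)
        fun p => D.eqdim_conj_add_eqdim_dol_le p (k - p)

end DoubleComplex

theorem delta_nonneg_general {V : Type*} [AddCommGroup V] [Module ℂ V] (D : DoubleComplex V) (k : ℤ)
    (hk : {p | D.K p (k - p) ≠ ⊥}.Finite)
    [∀ p, FiniteDimensional ℂ
      (D.bcN p (k - p) ⧸ (D.bcD p (k - p)).comap (D.bcN p (k - p)).subtype)]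
    [∀ p, FiniteDimensional ℂ
      (D.aeN p (k - p) ⧸ (D.aeD p (k - p)).comap (D.aeN p (k - p)).subtype)] :
    0 ≤ (∑ᶠ p : ℤ, ((D.hBC p (k - p) : ℤ) + (D.hAe p (k - p) : ℤ))) - 2 * (D.b k : ℤ) := by
  have hcast : ∑ᶠ p : ℤ, ((D.hBC p (k - p) : ℤ) + (D.hAe p (k - p) : ℤ)) =
      (∑ᶠ p : ℤ, (D.hBC p (k - p) + D.hAe p (k - p)) : ℕ) := by
    simp only [← Nat.cast_add]
    exact ((Nat.castAddMonoidHom ℤ).map_finsum_of_injective Nat.cast_injective _).symm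
  suffices 2 * D.b k ≤ ∑ᶠ p : ℤ, (D.hBC p (k - p) + D.hAe p (k - p)) by
    rw [hcast]
    omega
  rw [← ENat.natCast_le_natCast]
  calc ((2 * D.b k : ℕ) : ℕ∞)
      ≤ 2 * eqdim (D.dRN k) (D.dRD k) := by
        push_cast
        exact mul_le_mul_right (qdim_le_eqdim _ _) 2
    _ ≤ ∑ᶠ p, (eqdim (D.bcN p (k - p)) (D.bcD p (k - p)) +
          eqdim (D.aeN p (k - p)) (D.aeD p (k - p))) := D.two_mul_eqdim_dRN_le hk
    _ = ∑ᶠ p, ((D.hBC p (k - p) + D.hAe p (k - p) : ℕ) : ℕ∞) := by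
        simp only [eqdim_eq_qdim, DoubleComplex.hBC, DoubleComplex.hAe, Nat.cast_add]
    _ = (∑ᶠ p, (D.hBC p (k - p) + D.hAe p (k - p)) : ℕ) :=
        ((Nat.castAddMonoidHom ℕ∞).map_finsum_of_injective Nat.cast_injective _).symm

open DoubleComplex in
/-- For a bounded double complex of finite-dimensional complex vector spaces,
`Δ_k := Σ_{p+q=k} (h_BC^{p,q} + h_A^{p,q}) − 2 b_k` is non-negative for every `k`. -/
theorem delta_nonneg {V : Type*} [AddCommGroup V] [Module ℂ V]
    [FiniteDimensional ℂ V] (D : DoubleComplex V) (hb : D.Bounded) (k : ℤ) :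
    0 ≤ (∑ᶠ p : ℤ, ((D.hBC p (k - p) : ℤ) + (D.hAe p (k - p) : ℤ))) - 2 * (D.b k : ℤ) :=
  delta_nonneg_general D k <| hb.preimage (f := fun p => (p, k - p))
    (Function.LeftInverse.injective (g := Prod.fst) fun _ => rfl).injOn
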